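/- Let ε be a real with 0 < ε ≤ 1/2, let G be a P5-free graph, and let p, q be reals with 0 < p ≤ q ≤ (1−ε²)·ρ(G). If G is (p,q)-sparse, then G contains either: (i) an anticomplete pair (A,B) with ρ(A) ≥ q − 2ε^8·ρ(G) and ρ(B) ≥ (1−ε²)·ρ(G); or (ii) a complete pair (X,Y) with ρ(X) ≥ ε^8·ρ(G) and ρ(Y) ≥ p; or (iii) a complete blockade (B_1,…,B_k) with k ≥ 1/ε and ρ(B_i) ≥ k^{−8}·ρ(G) for all i ∈ [k]. -/

import Mathlib

/-!
Write `R` for `ρ(G)` and suppose that the complete-pair outcome fails, so that any set complete to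
a set of Hall ratio at least `p` has Hall ratio below `ε⁸R`.

The Hall ratio is subadditive, and on an anticomplete union it is the maximum. So a connected set
`C` with `ρ(C) ≥ q` contains connected anticomplete sets `X, Y` of Hall ratio at least `p`; in a
`P₅`-free graph a vertex with neighbours in both is complete to one of them, so if `|X| + |Y|` is
maximal then the vertices separating `X`, `Y` and the rest of `C` have Hall ratio below `2ε⁸R`
(`exists_shrink`). Deleting them and keeping the best component shrinks `C` while losing little.
Repeating this as long as `ρ(C) ≥ (1 - ε²)R` gives a connected `C` with `ρ(C)` within `2ε⁸R` of
`(1 - ε²)R` such that every vertex mixed on `C` is complete to some connected `Z` anticomplete to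
`C` with `ρ(Z) ≥ p` (`exists_core`).

If the anticomplete-pair outcome fails too, the vertices anticomplete to `C` have Hall ratio below
`q - 2ε⁸R`, and those complete to `C` have Hall ratio below `ε⁸R`, so the set `M` of vertices mixed
on `C` has Hall ratio at least `(ε² - 3ε⁸)R`. The sets `T Z` of vertices of `M` complete to `Z`
cover `M`, and each has Hall ratio below `ε⁸R`. A vertex of `M` complete to `Z` but not to `W` is
adjacent to any vertex of `M` complete to `W` but not to `Z`, as otherwise there is a `P₅` through
`C` (`P5Free.adj_of_private`). Hence in every subfamily the private parts of the sets `T Z` form a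
complete blockade. If the blockade outcome fails as well, every subfamily of size `k ≥ 1/ε` has a
member with private part of Hall ratio below `k⁻⁸R`; deleting such members one at a time bounds
`ρ(M)` by `(ε⁷ + 2ε⁶)R` (`rhoSub_biUnion_le`), a contradiction.
-/

open SimpleGraph

/-- The five-vertex path `P₅`. -/
def P5 : SimpleGraph (Fin 5) := SimpleGraph.fromRel (fun i j => (i : ℕ) + 1 = (j : ℕ))

/-- A graph is `P₅`-free if it contains no induced copy of `P5`
(equivalently, no graph embedding of `P5`). -/
def P5Free {V : Type*} (G : SimpleGraph V) : Prop := IsEmpty (P5 ↪g G)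

/-- A graph is `T`-free if it contains no induced copy of `T`. -/
def TFree {W V : Type*} (T : SimpleGraph W) (G : SimpleGraph V) : Prop := IsEmpty (T ↪g G)

/-- A stable (independent) set of vertices. -/
def IsStableSet {V : Type*} (G : SimpleGraph V) (s : Finset V) : Prop :=
  ∀ ⦃u⦄, u ∈ s → ∀ ⦃v⦄, v ∈ s → ¬ G.Adj u v

/-- The stability number `α(G)`. -/
noncomputable def alphaNum {V : Type*} [Fintype V] (G : SimpleGraph V) : ℕ :=
  sSup {n | ∃ s : Finset V, IsStableSet G s ∧ s.card = n}

/-- The clique number `ω(G)`. -/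
noncomputable def omegaNum {V : Type*} [Fintype V] (G : SimpleGraph V) : ℕ :=
  sSup {n | ∃ s : Finset V, G.IsClique (s : Set V) ∧ s.card = n}

/-- `ψ(G) = |G| / α(G)` (and `0` for the null graph). -/
noncomputable def psi {V : Type*} [Fintype V] (G : SimpleGraph V) : ℝ :=
  if Fintype.card V = 0 then 0 else (Fintype.card V : ℝ) / (alphaNum G : ℝ)

/-- `ψ(S)` for a vertex subset `S`, i.e. `ψ(G[S])`. -/
noncomputable def psiSub {V : Type*} [Fintype V] (G : SimpleGraph V) (s : Finset V) : ℝ :=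
  psi (G.induce (↑s : Set V))

/-- The Hall ratio `ρ(G)`: the maximum of `ψ(F)` over induced subgraphs `F` of `G`. -/
noncomputable def rho {V : Type*} [Fintype V] (G : SimpleGraph V) : ℝ :=
  ⨆ s : Finset V, psiSub G s

/-- `ρ(S)` for a vertex subset `S`, i.e. `ρ(G[S])`. -/
noncomputable def rhoSub {V : Type*} [Fintype V] (G : SimpleGraph V) (s : Finset V) : ℝ :=
  rho (G.induce (↑s : Set V))

/-- `(A, B)` is a complete pair: disjoint, with every vertex of `A` adjacent to every
vertex of `B`. -/
def CompletePair {V : Type*} (G : SimpleGraph V) (A B : Finset V) : Prop :=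
  Disjoint A B ∧ ∀ a ∈ A, ∀ b ∈ B, G.Adj a b

/-- `(A, B)` is an anticomplete pair: disjoint, with no edges between `A` and `B`. -/
def AnticompletePair {V : Type*} (G : SimpleGraph V) (A B : Finset V) : Prop :=
  Disjoint A B ∧ ∀ a ∈ A, ∀ b ∈ B, ¬ G.Adj a b

/-- A complete blockade: pairwise disjoint sets, pairwise complete to each other. -/
def CompleteBlockade {V : Type*} (G : SimpleGraph V) {k : ℕ} (B : Fin k → Finset V) : Prop :=
  (∀ i j, i ≠ j → Disjoint (B i) (B j)) ∧
  (∀ i j, i ≠ j → ∀ a ∈ B i, ∀ b ∈ B j, G.Adj a b)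

/-- An anticomplete blockade: pairwise disjoint sets, pairwise anticomplete to each other. -/
def AnticompleteBlockade {V : Type*} (G : SimpleGraph V) {k : ℕ} (B : Fin k → Finset V) : Prop :=
  (∀ i j, i ≠ j → Disjoint (B i) (B j)) ∧
  (∀ i j, i ≠ j → ∀ a ∈ B i, ∀ b ∈ B j, ¬ G.Adj a b)

/-- The fractional chromatic number `χ*(G)`: the least `q ≥ 0` for which there are
nonnegative weights on the stable sets summing to `q` that cover every vertex with
total weight at least `1`. -/
noncomputable def fracChrom {V : Type*} [Fintype V] [DecidableEq V] (G : SimpleGraph V) : ℝ :=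
  sInf {q : ℝ | 0 ≤ q ∧ ∃ x : Finset V → ℝ,
    (∀ s, 0 ≤ x s) ∧ (∀ s, ¬ IsStableSet G s → x s = 0) ∧
    (∑ s : Finset V, x s) = q ∧
    ∀ v : V, 1 ≤ ∑ s ∈ Finset.univ.filter (fun s : Finset V => v ∈ s), x s}

/-- `G` is `ε`-sparse: every vertex has degree at most `ε·|G|`. -/
def EpsSparse {V : Type*} [Fintype V] (ε : ℝ) (G : SimpleGraph V) : Prop :=
  ∀ v : V, ((G.neighborSet v).ncard : ℝ) ≤ ε * (Fintype.card V : ℝ)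

/-- `G` is `(1-ε)`-dense: the complement of `G` is `ε`-sparse. -/
def OneSubEpsDense {V : Type*} [Fintype V] (ε : ℝ) (G : SimpleGraph V) : Prop :=
  EpsSparse ε Gᶜ

/-- `G` is `ε`-restricted: `ε`-sparse or `(1-ε)`-dense. -/
def EpsRestricted {V : Type*} [Fintype V] (ε : ℝ) (G : SimpleGraph V) : Prop :=
  EpsSparse ε G ∨ OneSubEpsDense ε G

/-- `G` is `(p,q)`-sparse: every induced subgraph `F` with `ρ(F) ≥ q` contains an
anticomplete pair `(X,Y)` with `ρ(X), ρ(Y) ≥ p`. -/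
def PQSparse {V : Type*} [Fintype V] (G : SimpleGraph V) (p q : ℝ) : Prop :=
  ∀ s : Finset V, q ≤ rhoSub G s →
    ∃ X Y : Finset V, X ⊆ s ∧ Y ⊆ s ∧ AnticompletePair G X Y ∧
      p ≤ rhoSub G X ∧ p ≤ rhoSub G Y

/-- `φ_s = ∏_{i=1}^{s} (1 - 2^{-2^{i+1}})` (so `φ_0 = 1`). -/
noncomputable def phi (s : ℕ) : ℝ :=
  ∏ i ∈ Finset.Icc 1 s, (1 - ((2:ℝ) ^ (2 ^ (i+1)))⁻¹)

/-- `φ_{r,s} = φ_s / φ_r`. -/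
noncomputable def phiRS (r s : ℕ) : ℝ := phi s / phi r

/-! ### The Hall ratio of vertex subsets -/

section HallRatio

open Classical in
lemma exists_alphaNum {V : Type*} [Fintype V] (G : SimpleGraph V) :
    ∃ u : Finset V, IsStableSet G u ∧ u.card = alphaNum G := by
  have h : alphaNum G ∈ {n | ∃ s : Finset V, IsStableSet G s ∧ s.card = n} := by
    apply Nat.sSup_mem
    · exact ⟨0, ∅, by intro u hu; simp at hu, by simp⟩
    · refine ⟨Fintype.card V, ?_⟩
      rintro n ⟨s, -, rfl⟩
      exact Finset.card_le_univ s
  exact h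

lemma card_le_alphaNum {V : Type*} [Fintype V] (G : SimpleGraph V) {u : Finset V}
    (hu : IsStableSet G u) : u.card ≤ alphaNum G := by
  apply le_csSup
  · refine ⟨Fintype.card V, ?_⟩
    rintro n ⟨s, -, rfl⟩
    exact Finset.card_le_univ s
  · exact ⟨u, hu, rfl⟩

lemma psi_le_iff {V : Type*} [Fintype V] (G : SimpleGraph V) {x : ℝ} (hx : 0 ≤ x) :
    psi G ≤ x ↔ ∃ u : Finset V, IsStableSet G u ∧ (Fintype.card V : ℝ) ≤ x * u.card := by
  unfold psi
  split_ifs with h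
  · simp only [hx, true_iff]
    exact ⟨∅, by intro u hu; simp at hu, by simp [h]⟩
  · have hpos : 0 < alphaNum G := by
      obtain ⟨v⟩ : Nonempty V := Fintype.card_pos_iff.1 (Nat.pos_of_ne_zero h)
      have : ({v} : Finset V).card ≤ alphaNum G := by
        apply card_le_alphaNum
        intro a ha b hb
        simp only [Finset.mem_singleton] at ha hb
        subst ha; subst hb
        exact G.irrefl
      rw [Finset.card_singleton] at this
      exact this
    have hpos' : (0 : ℝ) < alphaNum G := by exact_mod_cast hpos
    rw [div_le_iff₀ hpos']
    constructor
    · intro hle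
      obtain ⟨u, hu, hc⟩ := exists_alphaNum G
      exact ⟨u, hu, by rw [hc]; exact hle⟩
    · rintro ⟨u, hu, hc⟩
      refine hc.trans (mul_le_mul_of_nonneg_left ?_ hx)
      exact_mod_cast card_le_alphaNum G hu

lemma psi_nonneg {V : Type*} [Fintype V] (G : SimpleGraph V) : 0 ≤ psi G := by
  unfold psi
  split_ifs <;> positivity

/-- Passing from `G[s]` to `G`: the stable sets of `G[s]` are the stable subsets of `s`. -/
lemma psiSub_le_iff {V : Type*} [Fintype V] (G : SimpleGraph V) (s : Finset V) {x : ℝ}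
    (hx : 0 ≤ x) :
    psiSub G s ≤ x ↔ ∃ u ⊆ s, IsStableSet G u ∧ (s.card : ℝ) ≤ x * u.card := by
  classical
  unfold psiSub
  rw [psi_le_iff _ hx]
  have hc : Fintype.card (↑(↑s : Set V)) = s.card := by simp
  rw [hc]
  constructor
  · rintro ⟨u, hu, h⟩
    refine ⟨u.map (Function.Embedding.subtype _), ?_, ?_, ?_⟩
    · intro a ha
      simp only [Finset.mem_map, Function.Embedding.coe_subtype] at ha
      obtain ⟨b, -, rfl⟩ := ha
      exact b.2
    · intro a ha b hb
      simp only [Finset.mem_map, Function.Embedding.coe_subtype] at ha hb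
      obtain ⟨a, ha, rfl⟩ := ha
      obtain ⟨b, hb, rfl⟩ := hb
      exact hu ha hb
    · simpa using h
  · rintro ⟨u, hus, hu, h⟩
    refine ⟨u.subtype (· ∈ (↑s : Set V)), ?_, ?_⟩
    · intro a ha b hb
      rw [Finset.mem_subtype] at ha hb
      exact hu ha hb
    · have : (u.subtype (· ∈ (↑s : Set V))).card = u.card := by
        rw [Finset.card_subtype, Finset.filter_true_of_mem]
        intro a ha
        exact hus ha
      rw [this]
      exact h

lemma rho_le_iff {V : Type*} [Fintype V] (G : SimpleGraph V) {x : ℝ} (hx : 0 ≤ x) :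
    rho G ≤ x ↔ ∀ t : Finset V, ∃ u ⊆ t, IsStableSet G u ∧ (t.card : ℝ) ≤ x * u.card := by
  unfold rho
  rw [ciSup_le_iff (Set.finite_range _).bddAbove]
  exact forall_congr' fun t => psiSub_le_iff G t hx

lemma rho_nonneg {V : Type*} [Fintype V] (G : SimpleGraph V) : 0 ≤ rho G :=
  Real.iSup_nonneg fun _ => psi_nonneg _

lemma rhoSub_nonneg {V : Type*} [Fintype V] (G : SimpleGraph V) (s : Finset V) :
    0 ≤ rhoSub G s := rho_nonneg _

/-- The working characterisation of the Hall ratio of a vertex subset: `ρ(s) ≤ x` iff every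
`t ⊆ s` has a stable subset of size at least `|t| / x`. -/
lemma rhoSub_le_iff {V : Type*} [Fintype V] (G : SimpleGraph V) (s : Finset V) {x : ℝ}
    (hx : 0 ≤ x) :
    rhoSub G s ≤ x ↔
      ∀ t ⊆ s, ∃ u ⊆ t, IsStableSet G u ∧ (t.card : ℝ) ≤ x * u.card := by
  classical
  unfold rhoSub
  rw [rho_le_iff _ hx]
  constructor
  · intro h t hts
    obtain ⟨u, hut, hu, hc⟩ := h (t.subtype (· ∈ (↑s : Set V)))
    have h1 : (t.subtype (· ∈ (↑s : Set V))).card = t.card := by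
      rw [Finset.card_subtype, Finset.filter_true_of_mem]
      intro a ha
      exact hts ha
    refine ⟨u.map (Function.Embedding.subtype _), ?_, ?_, ?_⟩
    · intro a ha
      simp only [Finset.mem_map, Function.Embedding.coe_subtype] at ha
      obtain ⟨b, hb, rfl⟩ := ha
      exact Finset.mem_subtype.1 (hut hb)
    · intro a ha b hb
      simp only [Finset.mem_map, Function.Embedding.coe_subtype] at ha hb
      obtain ⟨a, ha, rfl⟩ := ha
      obtain ⟨b, hb, rfl⟩ := hb
      exact hu ha hb
    · rw [h1] at hc
      simpa using hc
  · intro h t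
    obtain ⟨u, hut, hu, hc⟩ := h (t.map (Function.Embedding.subtype _)) (by
      intro a ha
      simp only [Finset.mem_map, Function.Embedding.coe_subtype] at ha
      obtain ⟨b, -, rfl⟩ := ha
      exact b.2)
    refine ⟨u.subtype (· ∈ (↑s : Set V)), ?_, ?_, ?_⟩
    · intro a ha
      rw [Finset.mem_subtype] at ha
      have := hut ha
      simpa using this
    · intro a ha b hb
      rw [Finset.mem_subtype] at ha hb
      exact hu ha hb
    · have : (u.subtype (· ∈ (↑s : Set V))).card = u.card := by
        rw [Finset.card_subtype, Finset.filter_true_of_mem]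
        intro a ha
        have := hut ha
        simp only [Finset.mem_map, Function.Embedding.coe_subtype] at this
        obtain ⟨b, -, rfl⟩ := this
        exact b.2
      rw [this]
      simpa using hc

lemma rhoSub_mono {V : Type*} [Fintype V] (G : SimpleGraph V) {s t : Finset V} (h : s ⊆ t) :
    rhoSub G s ≤ rhoSub G t := by
  rw [rhoSub_le_iff _ _ (rhoSub_nonneg G t)]
  intro w hw
  exact (rhoSub_le_iff G t (rhoSub_nonneg G t)).1 le_rfl w (hw.trans h)

lemma rhoSub_empty {V : Type*} [Fintype V] (G : SimpleGraph V) :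
    rhoSub G ∅ = 0 := by
  apply le_antisymm _ (rhoSub_nonneg G _)
  rw [rhoSub_le_iff _ _ le_rfl]
  intro t ht
  rw [Finset.subset_empty] at ht
  subst ht
  exact ⟨∅, by simp, by intro u hu; simp at hu, by simp⟩

lemma nonempty_of_rhoSub_pos {V : Type*} [Fintype V] {G : SimpleGraph V} {s : Finset V}
    (h : 0 < rhoSub G s) : s.Nonempty := by
  rw [Finset.nonempty_iff_ne_empty]
  rintro rfl
  rw [rhoSub_empty] at h
  exact lt_irrefl _ h

lemma rho_le_rhoSub_univ {V : Type*} [Fintype V] (G : SimpleGraph V) :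
    rho G ≤ rhoSub G Finset.univ := by
  rw [rho_le_iff _ (rhoSub_nonneg G _)]
  intro t
  exact (rhoSub_le_iff G _ (rhoSub_nonneg G _)).1 le_rfl t (Finset.subset_univ t)

open Classical in
lemma rhoSub_union_le {V : Type*} [Fintype V] (G : SimpleGraph V) (A B : Finset V) :
    rhoSub G (A ∪ B) ≤ rhoSub G A + rhoSub G B := by
  have hA := rhoSub_nonneg G A
  have hB := rhoSub_nonneg G B
  rw [rhoSub_le_iff _ _ (by positivity)]
  intro t ht
  obtain ⟨u, hut, hu, hc⟩ := (rhoSub_le_iff G A hA).1 le_rfl (t ∩ A) Finset.inter_subset_right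
  obtain ⟨w, hwt, hw, hd⟩ := (rhoSub_le_iff G B hB).1 le_rfl (t ∩ B) Finset.inter_subset_right
  have hcard : (t.card : ℝ) ≤ (t ∩ A).card + (t ∩ B).card := by
    have : t ⊆ (t ∩ A) ∪ (t ∩ B) := by
      intro a ha
      have := ht ha
      simp only [Finset.mem_union, Finset.mem_inter] at this ⊢
      tauto
    exact_mod_cast (Finset.card_le_card this).trans (Finset.card_union_le _ _)
  rcases le_total u.card w.card with h | h
  · refine ⟨w, hwt.trans Finset.inter_subset_left, hw, ?_⟩
    have : (u.card : ℝ) ≤ w.card := by exact_mod_cast h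
    nlinarith [mul_le_mul_of_nonneg_left this hA]
  · refine ⟨u, hut.trans Finset.inter_subset_left, hu, ?_⟩
    have : (w.card : ℝ) ≤ u.card := by exact_mod_cast h
    nlinarith [mul_le_mul_of_nonneg_left this hB]

open Classical in
/-- Stable sets in anticomplete sets can be united, so the Hall ratio of the union is the maximum
of the two Hall ratios. -/
lemma rhoSub_union_le_max {V : Type*} [Fintype V] (G : SimpleGraph V) {A B : Finset V}
    (h : AnticompletePair G A B) :
    rhoSub G (A ∪ B) ≤ max (rhoSub G A) (rhoSub G B) := by
  have hA := rhoSub_nonneg G A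
  have hB := rhoSub_nonneg G B
  have hM : 0 ≤ max (rhoSub G A) (rhoSub G B) := le_max_of_le_left hA
  rw [rhoSub_le_iff _ _ hM]
  intro t ht
  obtain ⟨u, hut, hu, hc⟩ := (rhoSub_le_iff G A hM).1 (le_max_left _ _) (t ∩ A)
    Finset.inter_subset_right
  obtain ⟨w, hwt, hw, hd⟩ := (rhoSub_le_iff G B hM).1 (le_max_right _ _) (t ∩ B)
    Finset.inter_subset_right
  have hcard : (t.card : ℝ) ≤ (t ∩ A).card + (t ∩ B).card := by
    have : t ⊆ (t ∩ A) ∪ (t ∩ B) := by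
      intro a ha
      have := ht ha
      simp only [Finset.mem_union, Finset.mem_inter] at this ⊢
      tauto
    exact_mod_cast (Finset.card_le_card this).trans (Finset.card_union_le _ _)
  have huA : u ⊆ A := hut.trans Finset.inter_subset_right
  have hwB : w ⊆ B := hwt.trans Finset.inter_subset_right
  refine ⟨u ∪ w, Finset.union_subset (hut.trans Finset.inter_subset_left)
    (hwt.trans Finset.inter_subset_left), ?_, ?_⟩
  · intro a ha b hb
    rw [Finset.mem_union] at ha hb
    rcases ha with ha | ha <;> rcases hb with hb | hb
    · exact hu ha hb
    · exact h.2 a (huA ha) b (hwB hb)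
    · exact fun hab => h.2 b (huA hb) a (hwB ha) hab.symm
    · exact hw ha hb
  · rw [Finset.card_union_of_disjoint (Finset.disjoint_of_subset_left huA
      (Finset.disjoint_of_subset_right hwB h.1))]
    push_cast
    linarith

end HallRatio

/-! ### Connected sets and induced five-vertex paths -/

section Structure

/-- `C` induces a connected subgraph, stated through cuts: every nonempty proper subset of `C` has
an edge of `G` to the rest of `C`. The empty set counts as connected. -/
def ConnSet {V : Type*} (G : SimpleGraph V) (C : Finset V) : Prop :=
  ∀ P ⊆ C, P.Nonempty → P ≠ C → ∃ u ∈ P, ∃ v ∈ C, v ∉ P ∧ G.Adj u v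

/-- `v` is mixed on `C`: it has both a neighbour and a non-neighbour in `C`. -/
def Mixed {V : Type*} (G : SimpleGraph V) (v : V) (C : Finset V) : Prop :=
  (∃ c ∈ C, G.Adj v c) ∧ ∃ c ∈ C, ¬ G.Adj v c

lemma P5Free.false_of_path {V : Type*} {G : SimpleGraph V} (hG : P5Free G) {a b c d e : V}
    (hab : G.Adj a b) (hbc : G.Adj b c) (hcd : G.Adj c d) (hde : G.Adj d e)
    (hac : ¬ G.Adj a c) (had : ¬ G.Adj a d) (hae : ¬ G.Adj a e)
    (hbd : ¬ G.Adj b d) (hbe : ¬ G.Adj b e) (hce : ¬ G.Adj c e) : False := by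
  have n1 : a ≠ b := hab.ne
  have n2 : a ≠ c := by rintro rfl; exact had hcd
  have n3 : a ≠ d := by rintro rfl; exact hbd hab.symm
  have n4 : a ≠ e := by rintro rfl; exact hbe hab.symm
  have n5 : b ≠ c := hbc.ne
  have n6 : b ≠ d := by rintro rfl; exact had hab
  have n7 : b ≠ e := by rintro rfl; exact hae hab
  have n8 : c ≠ d := hcd.ne
  have n9 : c ≠ e := by rintro rfl; exact hbe hbc
  have n10 : d ≠ e := hde.ne
  refine hG.false ⟨⟨![a, b, c, d, e], ?_⟩, ?_⟩
  · intro i j hij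
    fin_cases i <;> fin_cases j <;> simp_all
  · intro i j
    change G.Adj (![a, b, c, d, e] i) (![a, b, c, d, e] j) ↔ P5.Adj i j
    fin_cases i <;> fin_cases j <;>
      simp_all [P5, SimpleGraph.fromRel_adj, G.adj_comm]

open Classical in
/-- A vertex mixed on a connected set sees exactly one end of some edge of the set. -/
lemma ConnSet.exists_edge {V : Type*} {G : SimpleGraph V} {C : Finset V} (hC : ConnSet G C)
    {v : V} (hv : Mixed G v C) :
    ∃ c ∈ C, ∃ d ∈ C, G.Adj v c ∧ ¬ G.Adj v d ∧ G.Adj c d := by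
  obtain ⟨⟨c, hc, hvc⟩, d, hd, hvd⟩ := hv
  obtain ⟨x, hx, y, hy, hyx, hxy⟩ := hC (C.filter (G.Adj v ·)) (Finset.filter_subset _ _)
    ⟨c, by simp [hc, hvc]⟩ (by
      intro h
      rw [← h] at hd
      exact hvd (Finset.mem_filter.1 hd).2)
  simp only [Finset.mem_filter] at hx hyx
  exact ⟨x, hx.1, y, hy, hx.2, fun h => hyx ⟨hy, h⟩, hxy⟩

open Classical in
lemma ConnSet.insert {V : Type*} {G : SimpleGraph V} {C : Finset V} (hC : ConnSet G C)
    {v c : V} (hc : c ∈ C) (hvc : G.Adj v c) : ConnSet G (insert v C) := by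
  intro P hP hne hPne
  by_cases hvP : v ∈ P
  · by_cases hcP : c ∈ P
    · obtain ⟨x, hx, y, hy, hyx, hxy⟩ := hC (P ∩ C) Finset.inter_subset_right
        ⟨c, by simp [hc, hcP]⟩ (by
          intro h
          apply hPne
          apply Finset.Subset.antisymm hP
          intro w hw
          rcases Finset.mem_insert.1 hw with rfl | hw
          · exact hvP
          · rw [← h] at hw
            exact (Finset.mem_inter.1 hw).1)
      exact ⟨x, (Finset.mem_inter.1 hx).1, y, Finset.mem_insert_of_mem hy,
        fun h => hyx (Finset.mem_inter.2 ⟨h, hy⟩), hxy⟩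
    · exact ⟨v, hvP, c, Finset.mem_insert_of_mem hc, hcP, hvc⟩
  · have hPC : P ⊆ C := by
      intro w hw
      rcases Finset.mem_insert.1 (hP hw) with rfl | h
      · exact absurd hw hvP
      · exact h
    by_cases hcP : c ∈ P
    · exact ⟨c, hcP, v, Finset.mem_insert_self _ _, hvP, hvc.symm⟩
    · obtain ⟨x, hx, y, hy, hyx, hxy⟩ := hC P hPC hne (by rintro rfl; exact hcP hc)
      exact ⟨x, hx, y, Finset.mem_insert_of_mem hy, hyx, hxy⟩

open Classical in
/-- Some connected component of `G[s]` carries the whole Hall ratio of `s`. -/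
lemma exists_component {V : Type*} [Fintype V] (G : SimpleGraph V) (s : Finset V) :
    ∃ C ⊆ s, ConnSet G C ∧ rhoSub G s ≤ rhoSub G C ∧
      ∀ u ∈ s, u ∉ C → ∀ c ∈ C, ¬ G.Adj u c := by
  obtain ⟨C, hC, hmin⟩ := Finset.exists_min_image
    (Finset.univ.filter fun C : Finset V => C ⊆ s ∧ rhoSub G s ≤ rhoSub G C ∧
      ∀ u ∈ s, u ∉ C → ∀ c ∈ C, ¬ G.Adj u c) Finset.card
    ⟨s, by simp only [Finset.mem_filter]; exact ⟨Finset.mem_univ _, subset_rfl, le_rfl,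
      fun u hu hu' => absurd hu hu'⟩⟩
  simp only [Finset.mem_filter, Finset.mem_univ, true_and] at hC hmin
  obtain ⟨hCs, hr, hcl⟩ := hC
  refine ⟨C, hCs, ?_, hr, hcl⟩
  intro P hP hne hPne
  by_contra hcon
  push Not at hcon
  have hlt : P.card < C.card := Finset.card_lt_card (hP.ssubset_of_ne hPne)
  have hanti : AnticompletePair G P (C \ P) :=
    ⟨Finset.disjoint_sdiff, fun a ha b hb => hcon a ha b (Finset.mem_sdiff.1 hb).1
      (Finset.mem_sdiff.1 hb).2⟩
  have hle := rhoSub_union_le_max G hanti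
  rw [Finset.union_sdiff_of_subset hP] at hle
  rcases le_max_iff.1 hle with h | h
  · have := hmin P ⟨hP.trans hCs, hr.trans h, fun u hu huP c hc => by
      by_cases huC : u ∈ C
      · exact fun hadj => hcon c hc u huC huP hadj.symm
      · exact hcl u hu huC c (hP hc)⟩
    omega
  · have := hmin (C \ P) ⟨Finset.sdiff_subset.trans hCs, hr.trans h, fun u hu huP c hc => by
      rw [Finset.mem_sdiff] at hc
      by_cases huC : u ∈ C
      · have : u ∈ P := by
          by_contra h'
          exact huP (Finset.mem_sdiff.2 ⟨huC, h'⟩)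
        exact hcon u this c hc.1 hc.2
      · exact hcl u hu huC c hc.1⟩
    have h2 := Finset.card_sdiff_add_card_eq_card hP
    have h3 := hne.card_pos
    omega

/-- Two connected anticomplete sets both met by the neighbourhood of `v`: in a `P₅`-free graph `v`
is complete to one of them. -/
lemma P5Free.not_mixed_both {V : Type*} {G : SimpleGraph V} (hG : P5Free G) {X Y : Finset V}
    (hX : ConnSet G X) (hY : ConnSet G Y) (hXY : AnticompletePair G X Y) {v : V}
    (h1 : Mixed G v X) (h2 : Mixed G v Y) : False := by
  obtain ⟨c, hc, d, hd, hvc, hvd, hcd⟩ := hX.exists_edge h1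
  obtain ⟨c', hc', d', hd', hvc', hvd', hcd'⟩ := hY.exists_edge h2
  exact hG.false_of_path hcd.symm hvc.symm hvc' hcd' (fun h => hvd h.symm)
    (hXY.2 d hd c' hc') (hXY.2 d hd d' hd') (hXY.2 c hc c' hc') (hXY.2 c hc d' hd') hvd'

open Classical in
/-- Let `u, v` have neighbours in a connected set `C`, and let `a, b` be nonadjacent private
neighbours of `u` and `v` with no neighbour in `C`. Then a shortest path from `u` to `v` through
`C`, extended by `a` and `b`, would contain a `P₅` unless `u` and `v` are adjacent. -/
lemma P5Free.adj_of_private {V : Type*} {G : SimpleGraph V} (hG : P5Free G) {C : Finset V}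
    (hC : ConnSet G C) {u v a b : V} (hu : ∃ c ∈ C, G.Adj u c) (hv : ∃ c ∈ C, G.Adj v c)
    (ha : ∀ c ∈ C, ¬ G.Adj a c) (hb : ∀ c ∈ C, ¬ G.Adj b c)
    (hua : G.Adj u a) (hvb : G.Adj v b) (hub : ¬ G.Adj u b) (hva : ¬ G.Adj v a)
    (hab : ¬ G.Adj a b) : G.Adj u v := by
  by_contra huv
  have hno : ∀ c ∈ C, G.Adj u c → ¬ G.Adj v c := by
    intro c hc h1 h2
    exact hG.false_of_path hua.symm h1 h2.symm hvb (ha c hc) (fun h => hva h.symm) hab huv hub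
      (fun h => hb c hc h.symm)
  obtain ⟨c₀, hc₀, hu₀⟩ := hu
  obtain ⟨d, hd, hvd⟩ := hv
  have hfar : d ∈ C.filter fun x => G.Adj u x ∨ ∃ c ∈ C, G.Adj u c ∧ G.Adj c x := by
    by_contra hdn
    -- an edge leaving the distance-two ball of `u` in `C` ends an induced path starting with `a, u`
    obtain ⟨x, hx, y, hy, hyn, hxy⟩ := hC
      (C.filter fun x => G.Adj u x ∨ ∃ c ∈ C, G.Adj u c ∧ G.Adj c x)
      (Finset.filter_subset _ _) ⟨c₀, by simp [hc₀, hu₀]⟩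
      (fun h => hdn (by rw [h]; exact hd))
    simp only [Finset.mem_filter, not_and, not_or, not_exists] at hx hyn
    obtain ⟨hy1, hy2⟩ := hyn hy
    have hux : ¬ G.Adj u x := fun h => hy2 x hx.1 h hxy
    obtain ⟨c, hc, huc, hcx⟩ := hx.2.resolve_left hux
    exact hG.false_of_path hua.symm huc hcx hxy (ha c hc) (ha x hx.1) (ha y hy) hux hy1
      (hy2 c hc huc)
  obtain ⟨-, h | ⟨c, hc, huc, hcd⟩⟩ := Finset.mem_filter.1 hfar
  · exact hno d hd h hvd
  · exact hG.false_of_path hua.symm huc hcd hvd.symm (ha c hc) (ha d hd) (fun h => hva h.symm)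
      (fun h => hno d hd h hvd) huv (fun h => hno c hc huc h.symm)

end Structure

/-! ### Shrinking the connected set -/

section Shrinking

open Classical in
/-- One shrinking step. Inside a connected set `C` take connected anticomplete sets `X, Y` of Hall
ratio at least `p` with `|X| + |Y|` maximal. The remaining vertices of `C` with a neighbour in
`X ∪ Y` have neighbours in both, hence are complete to `X` or to `Y`, so together they have Hall
ratio at most `2δ`. Delete them and keep the best component. -/
lemma exists_shrink {V : Type*} [Fintype V] {G : SimpleGraph V} (hG : P5Free G) {p q δ : ℝ}
    (hp : 0 < p) (hsp : PQSparse G p q)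
    (hii : ∀ X Y, CompletePair G X Y → p ≤ rhoSub G Y → rhoSub G X < δ)
    {C : Finset V} (hC : ConnSet G C) (hqC : q ≤ rhoSub G C) :
    ∃ C' ⊆ C, C' ≠ C ∧ ConnSet G C' ∧ rhoSub G C ≤ rhoSub G C' + 2 * δ ∧
      ∀ v ∈ C, v ∉ C' → Mixed G v C' → ∃ Z, ConnSet G Z ∧ AnticompletePair G Z C' ∧
        p ≤ rhoSub G Z ∧ ∀ z ∈ Z, G.Adj v z := by
  obtain ⟨X₀, Y₀, hX₀, hY₀, hXY₀, hpX₀, hpY₀⟩ := hsp C hqC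
  obtain ⟨X₁, hX₁, hX₁c, hX₁r, -⟩ := exists_component G X₀
  obtain ⟨Y₁, hY₁, hY₁c, hY₁r, -⟩ := exists_component G Y₀
  obtain ⟨⟨X, Y⟩, hmem, hmax⟩ := Finset.exists_max_image
    (Finset.univ.filter fun P : Finset V × Finset V => P.1 ⊆ C ∧ P.2 ⊆ C ∧ ConnSet G P.1 ∧
      ConnSet G P.2 ∧ AnticompletePair G P.1 P.2 ∧ p ≤ rhoSub G P.1 ∧ p ≤ rhoSub G P.2)
    (fun P => P.1.card + P.2.card)
    ⟨(X₁, Y₁), by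
      simp only [Finset.mem_filter, Finset.mem_univ, true_and]
      exact ⟨hX₁.trans hX₀, hY₁.trans hY₀, hX₁c, hY₁c,
        ⟨Finset.disjoint_of_subset_left hX₁ (Finset.disjoint_of_subset_right hY₁ hXY₀.1),
          fun a ha b hb => hXY₀.2 a (hX₁ ha) b (hY₁ hb)⟩, hpX₀.trans hX₁r, hpY₀.trans hY₁r⟩⟩
  simp only [Finset.mem_filter, Finset.mem_univ, true_and, Prod.forall] at hmem hmax
  obtain ⟨hXC, hYC, hXc, hYc, hXY, hpX, hpY⟩ := hmem
  have hXne : X.Nonempty := nonempty_of_rhoSub_pos (hp.trans_le hpX)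
  have hYne : Y.Nonempty := nonempty_of_rhoSub_pos (hp.trans_le hpY)
  have hnX : ∀ v ∈ C, v ∉ X → v ∉ Y → (∃ x ∈ X, G.Adj v x) → ∃ y ∈ Y, G.Adj v y := by
    rintro v hvC hvX hvY ⟨x, hx, hvx⟩
    by_contra hno
    push Not at hno
    have := hmax (insert v X) Y ⟨Finset.insert_subset hvC hXC, hYC, hXc.insert hx hvx, hYc,
      ⟨Finset.disjoint_insert_left.2 ⟨hvY, hXY.1⟩, fun a ha b hb => by
        rcases Finset.mem_insert.1 ha with rfl | ha
        · exact hno b hb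
        · exact hXY.2 a ha b hb⟩, hpX.trans (rhoSub_mono G (Finset.subset_insert _ _)), hpY⟩
    rw [Finset.card_insert_of_notMem hvX] at this
    omega
  have hnY : ∀ v ∈ C, v ∉ X → v ∉ Y → (∃ y ∈ Y, G.Adj v y) → ∃ x ∈ X, G.Adj v x := by
    rintro v hvC hvX hvY ⟨y, hy, hvy⟩
    by_contra hno
    push Not at hno
    have := hmax X (insert v Y) ⟨hXC, Finset.insert_subset hvC hYC, hXc, hYc.insert hy hvy,
      ⟨Finset.disjoint_insert_right.2 ⟨hvX, hXY.1⟩, fun a ha b hb => by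
        rcases Finset.mem_insert.1 hb with rfl | hb
        · exact fun h => hno a ha h.symm
        · exact hXY.2 a ha b hb⟩, hpX, hpY.trans (rhoSub_mono G (Finset.subset_insert _ _))⟩
    rw [Finset.card_insert_of_notMem hvY] at this
    omega
  set SX := C.filter fun v => v ∉ X ∧ v ∉ Y ∧ ∀ x ∈ X, G.Adj v x with hSX
  set SY := C.filter fun v => v ∉ X ∧ v ∉ Y ∧ ∀ y ∈ Y, G.Adj v y with hSY
  have hSXr : rhoSub G SX < δ := hii SX X ⟨Finset.disjoint_left.2 fun v hv =>
    (Finset.mem_filter.1 hv).2.1, fun a ha b hb => (Finset.mem_filter.1 ha).2.2.2 b hb⟩ hpX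
  have hSYr : rhoSub G SY < δ := hii SY Y ⟨Finset.disjoint_left.2 fun v hv =>
    (Finset.mem_filter.1 hv).2.2.1, fun a ha b hb => (Finset.mem_filter.1 ha).2.2.2 b hb⟩ hpY
  have hcov : ∀ v ∈ C, v ∉ X → v ∉ Y → ((∃ x ∈ X, G.Adj v x) ∨ ∃ y ∈ Y, G.Adj v y) →
      v ∈ SX ∪ SY := by
    intro v hvC hvX hvY h
    have h1 : ∃ x ∈ X, G.Adj v x := h.elim id (hnY v hvC hvX hvY)
    have h2 : ∃ y ∈ Y, G.Adj v y := h.elim (hnX v hvC hvX hvY) id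
    by_contra hno
    simp only [hSX, hSY, Finset.mem_union, Finset.mem_filter, hvC, hvX, hvY, not_false_eq_true,
      true_and, not_or, not_forall] at hno
    obtain ⟨⟨x, hx, hvx⟩, y, hy, hvy⟩ := hno
    exact hG.not_mixed_both hXc hYc hXY ⟨h1, x, hx, hvx⟩ ⟨h2, y, hy, hvy⟩
  obtain ⟨C', hC', hC'c, hC'r, hC'cl⟩ := exists_component G (C \ (SX ∪ SY))
  have hXS : X ⊆ C \ (SX ∪ SY) := by
    intro x hx
    simp [hSX, hSY, hx, hXC hx]
  have hYS : Y ⊆ C \ (SX ∪ SY) := by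
    intro y hy
    simp [hSX, hSY, hy, hYC hy]
  have hC'C : C' ⊆ C := hC'.trans Finset.sdiff_subset
  -- `X` and `Y` are components of what is left, so `C'` is one of them or anticomplete to it
  have key : ∀ Z, Z ⊆ C \ (SX ∪ SY) → ConnSet G Z → Z ≠ C' →
      (∀ z ∈ Z, ∀ w ∈ C, w ∉ Z → G.Adj z w → w ∈ SX ∪ SY) → AnticompletePair G Z C' := by
    intro Z hZS hZc hZne hZcl
    have hdisj : Disjoint Z C' := by
      rw [Finset.disjoint_iff_inter_eq_empty]
      by_contra hne
      have hne := Finset.nonempty_iff_ne_empty.2 hne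
      have hsub : Z ⊆ C' := by
        by_contra hns
        obtain ⟨a, ha, b, hb, hba, hab⟩ := hZc (Z ∩ C') Finset.inter_subset_left hne
          (fun h => hns (Finset.inter_eq_left.1 h))
        exact hC'cl b (hZS hb) (fun h => hba (Finset.mem_inter.2 ⟨hb, h⟩)) a
          (Finset.mem_inter.1 ha).2 hab.symm
      obtain ⟨a, ha, b, hb, hba, hab⟩ := hC'c Z hsub (hne.mono Finset.inter_subset_left) hZne
      exact (Finset.mem_sdiff.1 (hC' hb)).2 (hZcl a ha b (hC'C hb) hba hab)
    exact ⟨hdisj, fun a ha b hb => hC'cl a (hZS ha) (Finset.disjoint_left.1 hdisj ha) b hb⟩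
  have clX : ∀ z ∈ X, ∀ w ∈ C, w ∉ X → G.Adj z w → w ∈ SX ∪ SY := fun z hz w hw hwX hzw =>
    hcov w hw hwX (fun h => hXY.2 z hz w h hzw) (Or.inl ⟨z, hz, hzw.symm⟩)
  have clY : ∀ z ∈ Y, ∀ w ∈ C, w ∉ Y → G.Adj z w → w ∈ SX ∪ SY := fun z hz w hw hwY hzw =>
    hcov w hw (fun h => hXY.2 w h z hz hzw.symm) hwY (Or.inr ⟨z, hz, hzw.symm⟩)
  refine ⟨C', hC'C, ?_, hC'c, ?_, ?_⟩
  · rintro rfl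
    obtain ⟨a, ha, b, hb, hba, hab⟩ := hC X hXC hXne (by
      rintro rfl
      obtain ⟨y, hy⟩ := hYne
      exact Finset.disjoint_left.1 hXY.1 (hYC hy) hy)
    exact (Finset.mem_sdiff.1 (hC' hb)).2 (clX a ha b hb hba hab)
  · have h1 : rhoSub G C ≤ rhoSub G ((C \ (SX ∪ SY)) ∪ (SX ∪ SY)) :=
      rhoSub_mono G (by intro v hv; simp only [Finset.mem_union, Finset.mem_sdiff]; tauto)
    have h2 := rhoSub_union_le G (C \ (SX ∪ SY)) (SX ∪ SY)
    have h3 := rhoSub_union_le G SX SY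
    linarith
  · intro v hvC hvC' hmix
    have hvS : v ∈ SX ∪ SY := by
      by_contra h
      obtain ⟨c, hc, hvc⟩ := hmix.1
      exact hC'cl v (Finset.mem_sdiff.2 ⟨hvC, h⟩) hvC' c hc hvc
    obtain ⟨c, hc, hvc⟩ := hmix.2
    rcases Finset.mem_union.1 hvS with h | h
    · have hall := (Finset.mem_filter.1 h).2.2.2
      exact ⟨X, hXc, key X hXS hXc (by rintro rfl; exact hvc (hall c hc)) clX, hpX, hall⟩
    · have hall := (Finset.mem_filter.1 h).2.2.2
      exact ⟨Y, hYc, key Y hYS hYc (by rintro rfl; exact hvc (hall c hc)) clY, hpY, hall⟩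

open Classical in
/-- The outcome of iterating the shrinking step while the Hall ratio stays at least `m`: every
vertex mixed on `C` is complete to a connected set `Z` anticomplete to `C` with `ρ(Z) ≥ p`. -/
lemma exists_core {V : Type*} [Fintype V] {G : SimpleGraph V} (hG : P5Free G) {p q δ m : ℝ}
    (hp : 0 < p) (hsp : PQSparse G p q)
    (hii : ∀ X Y, CompletePair G X Y → p ≤ rhoSub G Y → rhoSub G X < δ)
    (hqm : q ≤ m) (hm : m ≤ rho G) :
    ∃ C, ConnSet G C ∧ m ≤ rhoSub G C ∧ rhoSub G C ≤ m + 2 * δ ∧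
      ∀ v ∉ C, Mixed G v C → ∃ Z, ConnSet G Z ∧ AnticompletePair G Z C ∧
        p ≤ rhoSub G Z ∧ ∀ z ∈ Z, G.Adj v z := by
  obtain ⟨C₀, -, hc₀, hr₀, hcl₀⟩ := exists_component G (Finset.univ : Finset V)
  obtain ⟨C, hmem, hmin⟩ := Finset.exists_min_image
    (Finset.univ.filter fun C : Finset V => ConnSet G C ∧ m ≤ rhoSub G C ∧
      ∀ v ∉ C, Mixed G v C → ∃ Z, ConnSet G Z ∧ AnticompletePair G Z C ∧
        p ≤ rhoSub G Z ∧ ∀ z ∈ Z, G.Adj v z) Finset.card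
    ⟨C₀, by
      simp only [Finset.mem_filter, Finset.mem_univ, true_and]
      refine ⟨hc₀, hm.trans ((rho_le_rhoSub_univ G).trans hr₀), fun v hv hmix => ?_⟩
      obtain ⟨c, hc, hvc⟩ := hmix.1
      exact absurd hvc (hcl₀ v (Finset.mem_univ v) hv c hc)⟩
  simp only [Finset.mem_filter, Finset.mem_univ, true_and] at hmem hmin
  obtain ⟨hC, hmC, hinv⟩ := hmem
  refine ⟨C, hC, hmC, ?_, hinv⟩
  obtain ⟨C', hC'C, hne, hC', hr, hinv'⟩ := exists_shrink hG hp hsp hii hC (hqm.trans hmC)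
  by_contra hcon
  push Not at hcon
  have hlt := Finset.card_lt_card (hC'C.ssubset_of_ne hne)
  have := hmin C' ⟨hC', by linarith, fun v hv hmix => by
    by_cases hvC : v ∈ C
    · exact hinv' v hvC hv hmix
    · obtain ⟨⟨c, hc, hvc⟩, d, hd, hvd⟩ := hmix
      obtain ⟨Z, hZ, hZC, hpZ, hvZ⟩ := hinv v hvC ⟨⟨c, hC'C hc, hvc⟩, d, hC'C hd, hvd⟩
      exact ⟨Z, hZ, ⟨Finset.disjoint_of_subset_right hC'C hZC.1,
        fun a ha b hb => hZC.2 a ha b (hC'C hb)⟩, hpZ, hvZ⟩⟩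
  omega

end Shrinking

/-! ### Private parts of a covering family -/

section PrivateParts

open Classical in
/-- If no subfamily of size `k ≥ 1/ε` has all its private parts of Hall ratio at least `k⁻⁸R`, then
members can be deleted one at a time until fewer than `1/ε` remain, and the union is small. The
term `2 - 1/m` telescopes the losses, as `m⁻⁸ ≤ ε⁶(1/(m-1) - 1/m)` when `m ≥ 1/ε ≥ 2`. -/
lemma rhoSub_biUnion_le {V ι : Type*} [Fintype V] [DecidableEq ι] (G : SimpleGraph V)
    {ε R : ℝ} (hε0 : 0 < ε) (hε : ε ≤ 1 / 2) (hR : 0 < R) (T : ι → Finset V) (m : ℕ) :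
    ∀ F : Finset ι, F.card = m → (∀ i ∈ F, rhoSub G (T i) ≤ ε ^ 8 * R) →
      (∀ F' ⊆ F, 1 / ε ≤ (F'.card : ℝ) →
        ∃ i ∈ F', rhoSub G (T i \ (F'.erase i).biUnion T) < ((F'.card : ℝ) ^ 8)⁻¹ * R) →
      rhoSub G (F.biUnion T) ≤ (ε ^ 7 + ε ^ 6 * (2 - 1 / (m : ℝ))) * R := by
  induction m with
  | zero =>
    intro F hF _ _
    rw [Finset.card_eq_zero.1 hF, Finset.biUnion_empty, rhoSub_empty]
    norm_num
    positivity
  | succ m ih =>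
    intro F hF hsmall hdel
    by_cases hk : 1 / ε ≤ ((m + 1 : ℕ) : ℝ)
    · obtain ⟨i, hi, hlt⟩ := hdel F subset_rfl (by rw [hF]; exact hk)
      rw [hF] at hlt
      have hcard : (F.erase i).card = m := by rw [Finset.card_erase_of_mem hi, hF]; rfl
      have h1 := ih (F.erase i) hcard (fun j hj => hsmall j (Finset.mem_of_mem_erase hj))
        (fun F' hF' => hdel F' (hF'.trans (Finset.erase_subset _ _)))
      have h2 : rhoSub G (F.biUnion T) ≤ rhoSub G ((F.erase i).biUnion T) +
          rhoSub G (T i \ (F.erase i).biUnion T) := by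
        refine le_trans (rhoSub_mono G ?_) (rhoSub_union_le G _ _)
        intro v hv
        rw [Finset.union_sdiff_self_eq_union]
        obtain ⟨j, hj, hvj⟩ := Finset.mem_biUnion.1 hv
        by_cases hji : j = i
        · subst hji
          exact Finset.mem_union_right _ hvj
        · exact Finset.mem_union_left _
            (Finset.mem_biUnion.2 ⟨j, Finset.mem_erase.2 ⟨hji, hj⟩, hvj⟩)
      have hM : (2 : ℝ) ≤ ((m + 1 : ℕ) : ℝ) := by
        refine le_trans ?_ hk
        rw [le_div_iff₀ hε0]; linarith
      push_cast at hM hk hlt ⊢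
      have hm1 : (1 : ℝ) ≤ m := by linarith
      have hinv : ((m : ℝ) + 1)⁻¹ ≤ ε := by
        rw [inv_le_comm₀ (by positivity) hε0]; simpa using hk
      have h3 : (((m : ℝ) + 1) ^ 8)⁻¹ ≤ ε ^ 6 * (1 / (m : ℝ) - 1 / ((m : ℝ) + 1)) := by
        have e1 : (((m : ℝ) + 1) ^ 8)⁻¹ = (((m : ℝ) + 1)⁻¹) ^ 6 * (((m : ℝ) + 1)⁻¹) ^ 2 := by
          rw [← pow_add, inv_pow]
        rw [e1]
        apply mul_le_mul (pow_le_pow_left₀ (by positivity) hinv 6) _ (by positivity)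
          (by positivity)
        have e2 : 1 / (m : ℝ) - 1 / ((m : ℝ) + 1) = (m : ℝ)⁻¹ * ((m : ℝ) + 1)⁻¹ := by
          field_simp; ring
        rw [e2, sq]
        gcongr
        linarith
      have h4 := mul_le_mul_of_nonneg_right h3 hR.le
      have h5 : (ε ^ 7 + ε ^ 6 * (2 - 1 / ((m : ℝ) + 1))) * R =
          (ε ^ 7 + ε ^ 6 * (2 - 1 / (m : ℝ))) * R +
            ε ^ 6 * (1 / (m : ℝ) - 1 / ((m : ℝ) + 1)) * R := by ring
      rw [h5]
      linarith
    · have hsum : ∀ F' ⊆ F, rhoSub G (F'.biUnion T) ≤ F'.card * (ε ^ 8 * R) := by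
        intro F'
        induction F' using Finset.induction_on with
        | empty => intro _; simp [rhoSub_empty]
        | insert i s his IH =>
          intro hs
          rw [Finset.biUnion_insert, Finset.card_insert_of_notMem his]
          have h1 := rhoSub_union_le G (T i) (s.biUnion T)
          have h2 := hsmall i (hs (Finset.mem_insert_self _ _))
          have h3 := IH ((Finset.subset_insert _ _).trans hs)
          push_cast
          linarith
      have h1 := hsum F subset_rfl
      rw [hF] at h1
      push Not at hk
      have h2 : ((m + 1 : ℕ) : ℝ) * ε ≤ 1 := by
        rw [lt_div_iff₀ hε0] at hk; exact hk.le
      have h3 : ((m + 1 : ℕ) : ℝ) * (ε ^ 8 * R) ≤ ε ^ 7 * R := by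
        have : ((m + 1 : ℕ) : ℝ) * (ε ^ 8 * R) = (((m + 1 : ℕ) : ℝ) * ε) * (ε ^ 7 * R) := by ring
        rw [this]
        exact mul_le_of_le_one_left (by positivity) h2
      have h4 : 0 ≤ ε ^ 6 * (2 - 1 / ((m + 1 : ℕ) : ℝ)) * R := by
        have : 1 / ((m + 1 : ℕ) : ℝ) ≤ 1 := by
          rw [div_le_one (by positivity)]
          push_cast
          linarith [(Nat.cast_nonneg m : (0 : ℝ) ≤ m)]
        have h6 : 0 ≤ 2 - 1 / ((m + 1 : ℕ) : ℝ) := by linarith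
        positivity
      linarith

end PrivateParts

/-- Let `ε ∈ (0, 1/2]`, let `G` be `P₅`-free, and let `0 < p ≤ q ≤ (1−ε²)ρ(G)`.
If `G` is `(p,q)`-sparse, then `G` contains an anticomplete pair `(A,B)` with
`ρ(A) ≥ q − 2ε⁸ρ(G)` and `ρ(B) ≥ (1−ε²)ρ(G)`, or a complete pair `(X,Y)` with
`ρ(X) ≥ ε⁸ρ(G)` and `ρ(Y) ≥ p`, or a complete blockade `(B₁,…,B_k)` with `k ≥ 1/ε` and
`ρ(Bᵢ) ≥ k⁻⁸ρ(G)` for all `i`. -/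
theorem stmt_11 (ε : ℝ) (hε0 : 0 < ε) (hε : ε ≤ 1/2)
    (V : Type) [Fintype V] (G : SimpleGraph V) (hG : P5Free G)
    (p q : ℝ) (hp : 0 < p) (hpq : p ≤ q) (hq : q ≤ (1 - ε ^ 2) * rho G)
    (hsp : PQSparse G p q) :
    (∃ A B : Finset V, AnticompletePair G A B ∧
      q - 2 * ε ^ 8 * rho G ≤ rhoSub G A ∧ (1 - ε ^ 2) * rho G ≤ rhoSub G B) ∨
    (∃ X Y : Finset V, CompletePair G X Y ∧
      ε ^ 8 * rho G ≤ rhoSub G X ∧ p ≤ rhoSub G Y) ∨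
    (∃ (k : ℕ) (B : Fin k → Finset V), 1/ε ≤ (k : ℝ) ∧ CompleteBlockade G B ∧
      ∀ i, ((k : ℝ) ^ 8)⁻¹ * rho G ≤ rhoSub G (B i)) := by
  classical
  by_contra hcon
  push Not at hcon
  obtain ⟨hi, hii, hiii⟩ := hcon
  set R := rho G with hRdef
  have hε2 : ε ^ 2 ≤ 1 / 4 := by nlinarith
  have hR : 0 < R := by
    by_contra h
    push Not at h
    have : (1 - ε ^ 2) * R ≤ 0 := mul_nonpos_of_nonneg_of_nonpos (by linarith) h
    linarith
  have hii' : ∀ X Y, CompletePair G X Y → p ≤ rhoSub G Y → rhoSub G X < ε ^ 8 * R := by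
    intro X Y hXY hY
    by_contra h
    push Not at h
    exact absurd hY (not_le.2 (hii X Y hXY h))
  obtain ⟨C, hC, hCr, hCr', hinv⟩ := exists_core hG hp hsp hii' hq
    (by nlinarith [mul_pos (pow_pos hε0 2) hR])
  -- `V` splits into `C`, the vertices `A` anticomplete to `C`, `S` complete to `C`, `M` mixed on `C`
  set A := Finset.univ.filter fun v => v ∉ C ∧ ∀ c ∈ C, ¬ G.Adj v c with hA
  set S := Finset.univ.filter fun v => v ∉ C ∧ ∀ c ∈ C, G.Adj v c with hS
  set M := Finset.univ.filter fun v => v ∉ C ∧ Mixed G v C with hMdef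
  have hAC : AnticompletePair G A C :=
    ⟨Finset.disjoint_left.2 fun v hv => (Finset.mem_filter.1 hv).2.1,
      fun a ha b hb => (Finset.mem_filter.1 ha).2.2 b hb⟩
  have hAr : rhoSub G A < q - 2 * ε ^ 8 * R := by
    by_contra h
    push Not at h
    exact absurd hCr (not_le.2 (hi A C hAC h))
  have hSr : rhoSub G S < ε ^ 8 * R := hii' S C
    ⟨Finset.disjoint_left.2 fun v hv => (Finset.mem_filter.1 hv).2.1,
      fun a ha b hb => (Finset.mem_filter.1 ha).2.2 b hb⟩ (hpq.trans (hq.trans hCr))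
  have hε8R : 0 < ε ^ 8 * R := by positivity
  have hMlow : (ε ^ 2 - 3 * ε ^ 8) * R ≤ rhoSub G M := by
    have h1 : rhoSub G (Finset.univ : Finset V) ≤ rhoSub G ((A ∪ C) ∪ (S ∪ M)) := by
      apply rhoSub_mono
      intro v _
      simp only [hA, hS, hMdef, Finset.mem_union, Finset.mem_filter, Finset.mem_univ,
        true_and]
      by_cases hv : v ∈ C
      · tauto
      by_cases h1 : ∃ c ∈ C, G.Adj v c
      · by_cases h2 : ∃ c ∈ C, ¬ G.Adj v c
        · have : Mixed G v C := ⟨h1, h2⟩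
          tauto
        · push Not at h2
          tauto
      · push Not at h1
        tauto
    have h2 := rho_le_rhoSub_univ G
    have h3 := rhoSub_union_le G (A ∪ C) (S ∪ M)
    have h4 := rhoSub_union_le G S M
    have h5 : rhoSub G (A ∪ C) ≤ (1 - ε ^ 2) * R + 2 * (ε ^ 8 * R) :=
      (rhoSub_union_le_max G hAC).trans (max_le (by linarith) hCr')
    linarith
  set F := Finset.univ.filter fun Z : Finset V =>
    ConnSet G Z ∧ AnticompletePair G Z C ∧ p ≤ rhoSub G Z with hF
  let T : Finset V → Finset V := fun Z => M.filter fun v => ∀ z ∈ Z, G.Adj v z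
  have hMT : M ⊆ F.biUnion T := by
    intro v hv
    obtain ⟨hvC, hmix⟩ := (Finset.mem_filter.1 hv).2
    obtain ⟨Z, hZ, hZC, hpZ, hvZ⟩ := hinv v hvC hmix
    exact Finset.mem_biUnion.2 ⟨Z, Finset.mem_filter.2 ⟨Finset.mem_univ _, hZ, hZC, hpZ⟩,
      Finset.mem_filter.2 ⟨hv, hvZ⟩⟩
  have hTr : ∀ Z ∈ F, rhoSub G (T Z) ≤ ε ^ 8 * R := by
    intro Z hZ
    refine (hii' (T Z) Z ⟨Finset.disjoint_left.2 fun v hv hvZ => ?_,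
      fun a ha b hb => (Finset.mem_filter.1 ha).2 b hb⟩ (Finset.mem_filter.1 hZ).2.2.2).le
    exact G.irrefl ((Finset.mem_filter.1 hv).2 v hvZ)
  -- private parts of two members of the family are complete to each other
  have hpriv : ∀ Z ∈ F, ∀ W ∈ F, ∀ u ∈ M, ∀ v ∈ M, (∀ z ∈ Z, G.Adj u z) → (∀ w ∈ W, G.Adj v w) →
      (¬ ∀ w ∈ W, G.Adj u w) → (¬ ∀ z ∈ Z, G.Adj v z) → G.Adj u v := by
    intro Z hZ W hW u hu v hv huZ hvW huW hvZ
    obtain ⟨-, hZc, hZC, -⟩ := Finset.mem_filter.1 hZ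
    obtain ⟨-, hWc, hWC, -⟩ := Finset.mem_filter.1 hW
    have huM := (Finset.mem_filter.1 hu).2.2
    have hvM := (Finset.mem_filter.1 hv).2.2
    push Not at huW hvZ
    obtain ⟨b, hb, hub⟩ := huW
    obtain ⟨a, ha, hva⟩ := hvZ
    refine hG.adj_of_private hC (a := a) (b := b) huM.1 hvM.1 (hZC.2 a ha) (hWC.2 b hb)
      (huZ a ha) (hvW b hb) hub hva ?_
    intro hab
    -- otherwise `u` sees one end of the edge `ab` and one end of an edge of `C`
    obtain ⟨c, hc, d, hd, huc, hud, hcd⟩ := hC.exists_edge huM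
    exact hG.false_of_path hcd.symm huc.symm (huZ a ha) hab (fun h => hud h.symm)
      (fun h => hZC.2 a ha d hd h.symm) (fun h => hWC.2 b hb d hd h.symm)
      (fun h => hZC.2 a ha c hc h.symm) (fun h => hWC.2 b hb c hc h.symm) hub
  have hdel : ∀ F' ⊆ F, 1 / ε ≤ (F'.card : ℝ) →
      ∃ Z ∈ F', rhoSub G (T Z \ (F'.erase Z).biUnion T) < ((F'.card : ℝ) ^ 8)⁻¹ * R := by
    intro F' hF' hk
    let e := F'.equivFin.symm
    have hpr : ∀ i j : Fin F'.card, i ≠ j →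
        ∀ u ∈ T (e i) \ (F'.erase (e i)).biUnion T, u ∉ T (e j) := by
      intro i j hij u hu huj
      refine (Finset.mem_sdiff.1 hu).2 (Finset.mem_biUnion.2 ⟨e j, Finset.mem_erase.2
        ⟨fun h => hij (e.injective (Subtype.ext h)).symm, (e j).2⟩, huj⟩)
    have hblock : CompleteBlockade G
        (fun i : Fin F'.card => T (e i) \ (F'.erase (e i)).biUnion T) := by
      refine ⟨?_, ?_⟩
      · intro i j hij
        exact Finset.disjoint_left.2 fun u hu hu' => hpr i j hij u hu (Finset.mem_sdiff.1 hu').1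
      · intro i j hij u hu v hv
        obtain ⟨huM, huT⟩ := Finset.mem_filter.1 (Finset.mem_sdiff.1 hu).1
        obtain ⟨hvM, hvT⟩ := Finset.mem_filter.1 (Finset.mem_sdiff.1 hv).1
        exact hpriv _ (hF' (e i).2) _ (hF' (e j).2) u huM v hvM huT hvT
          (fun h => hpr i j hij u hu (Finset.mem_filter.2 ⟨huM, h⟩))
          (fun h => hpr j i hij.symm v hv (Finset.mem_filter.2 ⟨hvM, h⟩))
    obtain ⟨i, hi⟩ := hiii F'.card _ hk hblock
    exact ⟨e i, (e i).2, hi⟩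
  have hup := (rhoSub_mono G hMT).trans
    (rhoSub_biUnion_le G hε0 hε hR T F.card F rfl hTr hdel)
  -- `ε² - 3ε⁸ > ε⁷ + 2ε⁶` for `0 < ε ≤ 1/2`
  have h1 : ε ^ 7 + ε ^ 6 * (2 - 1 / (F.card : ℝ)) ≤ ε ^ 7 + 2 * ε ^ 6 := by
    have : 0 ≤ ε ^ 6 * (1 / (F.card : ℝ)) := by positivity
    linarith
  have h2 := mul_le_mul_of_nonneg_right h1 hR.le
  have h3 : ε ^ 2 - 3 * ε ^ 8 ≤ ε ^ 7 + 2 * ε ^ 6 := le_of_mul_le_mul_right (by linarith) hR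
  have e4 : ε ^ 4 ≤ 1 / 16 := by nlinarith [sq_nonneg ε]
  have e6 : ε ^ 6 ≤ 1 / 16 * ε ^ 2 := by nlinarith [pow_pos hε0 2]
  have e7 : ε ^ 7 ≤ 1 / 2 * ε ^ 6 := by nlinarith [pow_pos hε0 6]
  have e8 : ε ^ 8 ≤ 1 / 2 * ε ^ 7 := by nlinarith [pow_pos hε0 7]
  nlinarith [pow_pos hε0 2]
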